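/- arXiv:2511.09472 — 2 statements merged into one kernel-verified Lean document; each statement's English description precedes it below -/
import Mathlib

section
/- Let t ≥ 1 be an integer, T = 2^t, α > 0, and let A_1, …, A_t > 0 with A* = max_{1 ≤ l ≤ t} A_l². Let φ_{α,T} be the probability measure on C([0,T];ℝ) whose density with respect to one-dimensional Wiener measure P is proportional to exp( −(α/2) Σ_{l=1}^{t} A_l^{−2} (s̄_0^{2^l})² − (α/2) Σ_{l=1}^{t−1} A_l^{−2} (s̄_{T−2^l}^{2^l})² ). Then E^{φ_{α,T}}[ (σ_{T−1} − σ_0)² ] ≤ 2 α^{−1} Σ_{i=1}^{t} A_i² + 4 α^{−1} A* t². -/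
/-!
Write `a_l = s̄_0^{2^l}` and `b_l = s̄_{T-2^l}^{2^l}`. Since `a_l` is the difference of the means of
the path over `[0, 2^l]` and `[0, 2^{l-1}]`, and symmetrically for `b_l` at the right end,
telescoping gives `σ_{T-1} - σ_0 = ∑_{l ≤ t} a_l + ∑_{l ≤ t} b_l` with `b_t = a_t`
(`sigmaInt_sub_eq`). So the quantity to be estimated is `⟪w, Y⟫`, where `Y` is the vector of the
`2t - 1` functionals `√α A_l⁻¹ a_l` and `√α A_l⁻¹ b_l`, in terms of which `φ` has density
proportional to `exp (-‖Y‖²/2)`, and `‖w‖² = α⁻¹ (2 ∑_{l < t} A_l² + 4 A_t²)`.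

It remains to see that `E[⟪w, Y⟫² exp (-‖Y‖²/2)] ≤ ‖w‖² E[exp (-‖Y‖²/2)]`
(`weighted_second_moment_le`). This holds for every random vector `Y` whose characteristic function
has nonnegative real part, in particular for centered Gaussian ones, and the covariance need not
be invertible. Indeed, writing `exp (-‖y‖²/2)` as the Fourier transform of a Gaussian, applying
Fubini and translating by `w`, one finds that `exp (‖w‖²/2) E[cos ⟪w, Y⟫ exp (-‖Y‖²/2)]` is
proportional to `∫ exp (-‖v‖²/2) cosh ⟪w, v⟫ E[cos ⟪Y, v⟫] dv`, which is at least its value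
at `w = 0` because `cosh ≥ 1` (`weighted_charFun_ge`). Replacing `w` by `s w` and
comparing the terms of order `s²` as `s → 0` gives the moment bound.
-/

open MeasureTheory ProbabilityTheory Real

noncomputable section

instance : MeasurableSpace C(ℝ, ℝ) := borel _
instance : BorelSpace C(ℝ, ℝ) := ⟨rfl⟩

/-- `P` is the law of standard one-dimensional Brownian motion started at `0`
(on the time window `[0,T]`): a centered Gaussian measure with covariance
`E[x_s x_t] = min(s,t)`. -/
def IsWienerMeasure (T : ℝ) (P : Measure C(ℝ, ℝ)) : Prop :=
  IsProbabilityMeasure P ∧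
  (∀ L : C(ℝ, ℝ) →L[ℝ] ℝ, ∃ v : NNReal, P.map L = gaussianReal 0 v) ∧
  (∀ s t : ℝ, s ∈ Set.Icc 0 T → t ∈ Set.Icc 0 T → ∫ ω, ω s * ω t ∂P = min s t)

/-- `σ_j = ∫_j^{j+1} x_s ds`. -/
def sigmaInt (x : ℝ → ℝ) (j : ℝ) : ℝ := ∫ s in Set.Icc j (j + 1), x s

/-- `s̄_j^l = (1/l)(∫_{j+l/2}^{j+l} x_s ds - ∫_j^{j+l/2} x_s ds)`. -/
def sbar (x : ℝ → ℝ) (j l : ℝ) : ℝ :=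
  (1 / l) * ((∫ s in Set.Icc (j + l / 2) (j + l), x s) - ∫ s in Set.Icc j (j + l / 2), x s)

/-- The Gaussian path measure `φ_{α,T}` with density proportional to
`exp(-(α/2) Σ_{l=1}^t A_l⁻² (s̄_0^{2^l})² - (α/2) Σ_{l=1}^{t-1} A_l⁻² (s̄_{T-2^l}^{2^l})²)`. -/
def phiMeasure (P : Measure C(ℝ, ℝ)) (α : ℝ) (A : ℕ → ℝ) (t : ℕ) : Measure C(ℝ, ℝ) :=
  P.tilted (fun ω =>
    -(α / 2) * ((∑ l ∈ Finset.Icc 1 t, (A l ^ 2)⁻¹ * (sbar (fun u => ω u) 0 ((2:ℝ) ^ l)) ^ 2)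
      + ∑ l ∈ Finset.Icc 1 (t - 1),
          (A l ^ 2)⁻¹ * (sbar (fun u => ω u) ((2:ℝ) ^ t - (2:ℝ) ^ l) ((2:ℝ) ^ l)) ^ 2))

/-! ### Weighted moments of random vectors with nonnegative characteristic function -/

section core
variable {V : Type*} [NormedAddCommGroup V] [InnerProductSpace ℝ V] [FiniteDimensional ℝ V]
  [MeasurableSpace V] [BorelSpace V]

/-- The tilted Gaussian density `exp (-‖v‖²/2 + ⟪w, v⟫)`, up to normalisation. -/
def gaussTilt (w v : V) : ℝ := rexp (-‖v‖ ^ 2 / 2 + inner ℝ w v)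

lemma gaussTilt_eq (w v : V) :
    gaussTilt w v = rexp (‖w‖ ^ 2 / 2) * rexp (-‖v - w‖ ^ 2 / 2) := by
  rw [gaussTilt, ← Real.exp_add, norm_sub_sq_real, real_inner_comm]
  congr 1
  ring

lemma integrable_gaussTilt (w : V) : Integrable (gaussTilt w) (volume : Measure V) := by
  have h := (GaussianFourier.integrable_cexp_neg_mul_sq_norm_add (V := V) (b := 1 / 2)
    (by norm_num) 1 w).re
  refine h.congr (ae_of_all _ fun v => ?_)
  have : (-(1 / 2 : ℂ) * ‖v‖ ^ 2 + 1 * (inner ℝ w v : ℝ))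
      = ((-‖v‖ ^ 2 / 2 + inner ℝ w v : ℝ) : ℂ) := by push_cast; ring
  simp only [this, gaussTilt]
  exact Complex.exp_ofReal_re _

lemma integral_gaussTilt_pos : 0 < ∫ v : V, gaussTilt 0 v := by
  refine integral_exp_pos ?_
  exact integrable_gaussTilt (0 : V)

lemma integral_gaussTilt_cexp_zero (y : V) :
    ∫ v : V, (rexp (-‖v‖ ^ 2 / 2) : ℂ) * Complex.exp (Complex.I * (inner ℝ y v : ℝ))
      = ((∫ v : V, gaussTilt 0 v) * rexp (-‖y‖ ^ 2 / 2) : ℝ) := by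
  have h1 := GaussianFourier.integral_cexp_neg_mul_sq_norm_add (V := V) (b := 1 / 2)
    (by norm_num) Complex.I y
  have h2 := GaussianFourier.integral_cexp_neg_mul_sq_norm (V := V) (b := 1 / 2)
    (by norm_num)
  have e1 : ∀ v : V, (rexp (-‖v‖ ^ 2 / 2) : ℂ) * Complex.exp (Complex.I * (inner ℝ y v : ℝ))
      = Complex.exp (-(1 / 2) * ‖v‖ ^ 2 + Complex.I * (inner ℝ y v : ℝ)) := by
    intro v
    rw [Complex.ofReal_exp, ← Complex.exp_add]
    congr 1; push_cast; ring
  have e2 : ((∫ v : V, gaussTilt 0 v : ℝ) : ℂ)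
      = ∫ v : V, Complex.exp (-(1 / 2) * ‖v‖ ^ 2) := by
    rw [← integral_complex_ofReal]
    refine integral_congr_ae (ae_of_all _ fun v => ?_)
    simp only [gaussTilt, Complex.ofReal_exp]
    congr 1; simp; ring
  simp_rw [e1]
  rw [h1, Complex.ofReal_mul, e2, h2, Complex.ofReal_exp]
  congr 2
  rw [Complex.I_sq]; push_cast; ring

/-- The real part of the Fourier transform of the tilted Gaussian. By `gaussTilt_eq` it follows from
the untilted case by translation. -/
lemma integral_gaussTilt_mul_cos (w y : V) :
    ∫ v : V, gaussTilt w v * cos (inner ℝ y v)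
      = (∫ v : V, gaussTilt 0 v) * rexp (‖w‖ ^ 2 / 2) *
        (rexp (-‖y‖ ^ 2 / 2) * cos (inner ℝ w y)) := by
  have h := integral_gaussTilt_cexp_zero y
  rw [← integral_sub_right_eq_self _ w] at h
  have h' := congrArg (fun z : ℂ => (rexp (‖w‖ ^ 2 / 2) : ℂ) *
    Complex.exp (Complex.I * (inner ℝ y w : ℝ)) * z) h
  rw [← integral_const_mul] at h'
  have e : ∀ v : V, (rexp (‖w‖ ^ 2 / 2) : ℂ) * Complex.exp (Complex.I * (inner ℝ y w : ℝ)) *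
      ((rexp (-‖v - w‖ ^ 2 / 2) : ℂ) * Complex.exp (Complex.I * (inner ℝ y (v - w) : ℝ)))
      = (gaussTilt w v : ℂ) * Complex.exp (Complex.I * (inner ℝ y v : ℝ)) := by
    intro v
    rw [gaussTilt_eq, inner_sub_right, Complex.ofReal_mul]
    have : Complex.exp (Complex.I * (inner ℝ y v : ℝ))
      = Complex.exp (Complex.I * (inner ℝ y w : ℝ)) *
        Complex.exp (Complex.I * ((inner ℝ y v - inner ℝ y w : ℝ) : ℂ)) := by
      rw [← Complex.exp_add]; congr 1; push_cast; ring
    rw [this]; ring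
  simp_rw [e] at h'
  have hint : Integrable (fun v : V =>
      (gaussTilt w v : ℂ) * Complex.exp (Complex.I * (inner ℝ y v : ℝ))) := by
    refine (integrable_gaussTilt w).ofReal.mul_bdd (c := 1) ?_ (ae_of_all _ fun v => ?_)
    · exact Continuous.aestronglyMeasurable (by fun_prop)
    · rw [mul_comm, Complex.norm_exp_ofReal_mul_I]
  have h3 := congrArg Complex.re h'
  have hre := integral_re hint
  simp only [RCLike.re_to_complex] at hre
  rw [← hre] at h3
  have r : ∀ (a b : ℝ), ((a : ℂ) * Complex.exp (Complex.I * (b : ℂ))).re = a * cos b := by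
    intro a b
    rw [Complex.re_ofReal_mul, mul_comm Complex.I, Complex.exp_ofReal_mul_I_re]
  simp_rw [r] at h3
  rw [h3, mul_comm, Complex.re_ofReal_mul, r, real_inner_comm]
  ring

variable {Ω : Type*} [MeasurableSpace Ω] {P : Measure Ω} [IsProbabilityMeasure P] {Y : Ω → V}

lemma integrable_weight_mul (hY : Measurable Y) {F : V → ℝ} (hF : Continuous F) {c : ℝ}
    (hc : ∀ y, ‖rexp (-‖y‖ ^ 2 / 2) * F y‖ ≤ c) :
    Integrable (fun ω => rexp (-‖Y ω‖ ^ 2 / 2) * F (Y ω)) P := by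
  refine Integrable.of_bound (C := c) ?_ (ae_of_all _ fun ω => hc _)
  have : Continuous fun y : V => rexp (-‖y‖ ^ 2 / 2) * F y := by fun_prop
  exact (this.measurable.comp hY).aestronglyMeasurable

/-- Fubini: the weighted characteristic function of `Y` is a Gaussian average of the unweighted
one. -/
lemma integral_weight_mul_cos (hY : Measurable Y) (w : V) :
    (∫ v : V, gaussTilt 0 v) * rexp (‖w‖ ^ 2 / 2) *
        ∫ ω, rexp (-‖Y ω‖ ^ 2 / 2) * cos (inner ℝ w (Y ω)) ∂P
      = ∫ v : V, gaussTilt w v * ∫ ω, cos (inner ℝ (Y ω) v) ∂P := by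
  rw [← integral_const_mul]
  simp_rw [← integral_gaussTilt_mul_cos, ← integral_const_mul]
  refine integral_integral_swap ?_
  have h1 : Integrable (fun p : Ω × V => gaussTilt w p.2) (P.prod volume) :=
    (integrable_gaussTilt w).comp_snd P
  refine h1.mul_bdd (c := 1) ?_ (ae_of_all _ fun p => ?_)
  · exact (Real.measurable_cos.comp
      (Measurable.inner (hY.comp measurable_fst) measurable_snd)).aestronglyMeasurable
  · simpa using abs_cos_le_one _

lemma stronglyMeasurable_charFun (hY : Measurable Y) :
    StronglyMeasurable fun v : V => ∫ ω, cos (inner ℝ (Y ω) v) ∂P := by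
  have h : Measurable fun p : V × Ω => cos (inner ℝ (Y p.2) p.1) :=
    Real.measurable_cos.comp (Measurable.inner (hY.comp measurable_snd) measurable_fst)
  exact h.stronglyMeasurable.integral_prod_right'

/-- Nonnegativity of the characteristic function of `Y` forces the weighted characteristic function
to dominate a Gaussian. -/
lemma weighted_charFun_ge (hY : Measurable Y) (hK : ∀ v : V, 0 ≤ ∫ ω, cos (inner ℝ (Y ω) v) ∂P)
    (w : V) :
    ∫ ω, rexp (-‖Y ω‖ ^ 2 / 2) ∂P
      ≤ rexp (‖w‖ ^ 2 / 2) * ∫ ω, rexp (-‖Y ω‖ ^ 2 / 2) * cos (inner ℝ w (Y ω)) ∂P := by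
  have hC := integral_gaussTilt_pos (V := V)
  have h0 := integral_weight_mul_cos (P := P) hY (0 : V)
  have hp := integral_weight_mul_cos (P := P) hY w
  have hm := integral_weight_mul_cos (P := P) hY (-w)
  simp only [norm_neg, inner_neg_left, cos_neg] at hm
  simp only [norm_zero, inner_zero_left, cos_zero, mul_one, ne_eq, OfNat.ofNat_ne_zero,
    not_false_eq_true, zero_pow, zero_div, Real.exp_zero] at h0
  have hKm := stronglyMeasurable_charFun (P := P) hY
  have hi : ∀ w : V, Integrable (fun v => gaussTilt w v * ∫ ω, cos (inner ℝ (Y ω) v) ∂P) := by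
    intro w
    refine (integrable_gaussTilt w).mul_bdd (c := 1) hKm.aestronglyMeasurable (ae_of_all _ fun v => ?_)
    refine (norm_integral_le_of_norm_le_const (C := 1) (ae_of_all _ fun ω => ?_)).trans (by simp)
    simpa using abs_cos_le_one _
  have key : 2 * ∫ v : V, gaussTilt 0 v * ∫ ω, cos (inner ℝ (Y ω) v) ∂P
      ≤ (∫ v : V, gaussTilt w v * ∫ ω, cos (inner ℝ (Y ω) v) ∂P)
        + ∫ v : V, gaussTilt (-w) v * ∫ ω, cos (inner ℝ (Y ω) v) ∂P := by
    rw [← integral_add (hi w) (hi (-w)), ← integral_const_mul]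
    refine integral_mono ((hi 0).const_mul 2) ((hi w).add (hi (-w))) fun v => ?_
    have : 2 * gaussTilt 0 v ≤ gaussTilt w v + gaussTilt (-w) v := by
      simp only [gaussTilt, inner_zero_left, add_zero, inner_neg_left, Real.exp_add]
      have h1 := Real.one_le_cosh (inner ℝ w v)
      rw [Real.cosh_eq] at h1
      nlinarith [Real.exp_pos (-‖v‖ ^ 2 / 2)]
    have := mul_le_mul_of_nonneg_right this (hK v)
    simp only at *
    linarith
  rw [← h0, ← hp, ← hm] at key
  refine le_of_mul_le_mul_left ?_ hC
  linarith

/-- Reweighting by `exp (-‖Y‖²/2)` makes the second-moment form of `Y` at most the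
identity. The weighted second moment is the limit of the second difference quotients of the weighted
characteristic function, written through `x * sinc x = sin x`. -/
theorem weighted_second_moment_le (hY : Measurable Y)
    (hK : ∀ v : V, 0 ≤ ∫ ω, cos (inner ℝ (Y ω) v) ∂P) (w : V) :
    ∫ ω, rexp (-‖Y ω‖ ^ 2 / 2) * (inner ℝ w (Y ω)) ^ 2 ∂P
      ≤ ‖w‖ ^ 2 * ∫ ω, rexp (-‖Y ω‖ ^ 2 / 2) ∂P := by
  set J := ∫ ω, rexp (-‖Y ω‖ ^ 2 / 2) ∂P with hJ
  have hJ0 : 0 ≤ J := integral_nonneg fun ω => (Real.exp_pos _).le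
  have hb : ∀ y : V, rexp (-‖y‖ ^ 2 / 2) ≤ 1 := fun y => Real.exp_le_one_iff.2 (by
    have := sq_nonneg ‖y‖; linarith)
  have hb2 : ∀ y : V, ‖rexp (-‖y‖ ^ 2 / 2) * (inner ℝ w y) ^ 2‖ ≤ 2 * ‖w‖ ^ 2 := by
    intro y
    have h1 : (inner ℝ w y) ^ 2 ≤ ‖w‖ ^ 2 * ‖y‖ ^ 2 := by
      rw [← mul_pow, ← sq_abs]
      exact pow_le_pow_left₀ (abs_nonneg _) (abs_real_inner_le_norm w y) 2
    have h2 : ‖y‖ ^ 2 * rexp (-‖y‖ ^ 2 / 2) ≤ 2 := by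
      have h3 := Real.add_one_le_exp (‖y‖ ^ 2 / 2)
      rw [neg_div, Real.exp_neg, ← div_eq_mul_inv, div_le_iff₀ (Real.exp_pos _)]
      linarith
    rw [Real.norm_of_nonneg (by positivity)]
    calc _ ≤ rexp (-‖y‖ ^ 2 / 2) * (‖w‖ ^ 2 * ‖y‖ ^ 2) := by gcongr
      _ = ‖w‖ ^ 2 * (‖y‖ ^ 2 * rexp (-‖y‖ ^ 2 / 2)) := by ring
      _ ≤ ‖w‖ ^ 2 * 2 := by gcongr
      _ = _ := by ring
  have hint := integrable_weight_mul (P := P) hY (F := fun y => (inner ℝ w y) ^ 2)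
    (by fun_prop) hb2
  let H : ℝ → ℝ := fun s =>
    ∫ ω, rexp (-‖Y ω‖ ^ 2 / 2) * (inner ℝ w (Y ω)) ^ 2 * sinc (s * inner ℝ w (Y ω) / 2) ^ 2 ∂P
  have hlim : Filter.Tendsto H (nhdsWithin 0 {0}ᶜ)
      (nhds (∫ ω, rexp (-‖Y ω‖ ^ 2 / 2) * (inner ℝ w (Y ω)) ^ 2 ∂P)) := by
    refine tendsto_integral_filter_of_dominated_convergence
      (fun ω => rexp (-‖Y ω‖ ^ 2 / 2) * (inner ℝ w (Y ω)) ^ 2) ?_ ?_ hint ?_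
    · refine Filter.Eventually.of_forall fun s => ?_
      have : Continuous fun y : V =>
        rexp (-‖y‖ ^ 2 / 2) * (inner ℝ w y) ^ 2 * sinc (s * inner ℝ w y / 2) ^ 2 := by fun_prop
      exact (this.measurable.comp hY).aestronglyMeasurable
    · refine Filter.Eventually.of_forall fun s => ae_of_all _ fun ω => ?_
      rw [Real.norm_of_nonneg (by positivity)]
      refine mul_le_of_le_one_right (by positivity) ?_
      rw [sq_le_one_iff_abs_le_one]
      exact abs_sinc_le_one _
    · refine ae_of_all _ fun ω => ?_
      have : Continuous fun s : ℝ => rexp (-‖Y ω‖ ^ 2 / 2) * (inner ℝ w (Y ω)) ^ 2 *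
        sinc (s * inner ℝ w (Y ω) / 2) ^ 2 := by fun_prop
      have h := this.tendsto 0
      simp only [zero_mul, zero_div, sinc_zero, one_pow, mul_one] at h
      exact h.mono_left nhdsWithin_le_nhds
  refine le_of_tendsto hlim ?_
  filter_upwards [self_mem_nhdsWithin] with s hs
  have hs : s ≠ 0 := hs
  have hge := weighted_charFun_ge (P := P) hY hK (s • w)
  rw [← hJ] at hge
  set Js := ∫ ω, rexp (-‖Y ω‖ ^ 2 / 2) * cos (inner ℝ (s • w) (Y ω)) ∂P with hJs
  have hsin : ∀ x : ℝ, x * sinc x = sin x := by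
    intro x
    rcases eq_or_ne x 0 with rfl | hx
    · simp
    · rw [sinc_of_ne_zero hx]; field_simp
  have hHs : s ^ 2 * H s = 2 * (J - Js) := by
    rw [hJ, hJs, ← integral_sub, ← integral_const_mul, ← integral_const_mul]
    · refine integral_congr_ae (ae_of_all _ fun ω => ?_)
      simp only [inner_smul_left, conj_trivial]
      set u := inner ℝ w (Y ω)
      have h1 := hsin (s * u / 2)
      have h2 := Real.cos_sq (s * u / 2)
      rw [mul_div_cancel₀ (s * u) (two_ne_zero)] at h2
      have h3 := Real.sin_sq_add_cos_sq (s * u / 2)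
      rw [← h1] at h3
      have h4 : s ^ 2 * u ^ 2 * sinc (s * u / 2) ^ 2 = 2 * (1 - cos (s * u)) := by
        linear_combination 4 * h3 - 4 * h2
      linear_combination rexp (-‖Y ω‖ ^ 2 / 2) * h4
    · simpa using integrable_weight_mul (P := P) hY (F := fun _ => 1) (by fun_prop) (c := 1)
        (fun y => by simpa using hb y)
    · refine integrable_weight_mul (P := P) hY (F := fun y => cos (inner ℝ (s • w) y))
        (by fun_prop) (c := 1) (fun y => ?_)
      rw [norm_mul, Real.norm_of_nonneg (Real.exp_pos _).le]
      exact mul_le_one₀ (hb y) (norm_nonneg _) (by simpa using abs_cos_le_one _)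
  have hJs' : rexp (-(‖s • w‖ ^ 2 / 2)) * J ≤ Js := by
    rw [Real.exp_neg, inv_mul_le_iff₀ (Real.exp_pos _)]; exact hge
  have h5 := mul_le_mul_of_nonneg_right (Real.add_one_le_exp (-(‖s • w‖ ^ 2 / 2))) hJ0
  have h6 : ‖s • w‖ ^ 2 = s ^ 2 * ‖w‖ ^ 2 := by rw [norm_smul, mul_pow, Real.norm_eq_abs, sq_abs]
  rw [h6] at h5 hJs'
  refine le_of_mul_le_mul_left (a := s ^ 2) ?_ (by positivity)
  rw [hHs]
  linarith
end core

/-! ### The path functionals -/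

section functionals

/-- Convergence in the compact-open topology is uniform on `[a, b]`, which supplies the dominating
function. -/
lemma continuous_setIntegral_Icc (a b : ℝ) :
    Continuous fun f : C(ℝ, ℝ) => ∫ s in Set.Icc a b, f s := by
  rw [continuous_iff_continuousAt]
  intro f₀
  have hu := (ContinuousMap.tendsto_iff_forall_isCompact_tendstoUniformlyOn.mp
    (Filter.tendsto_id (x := nhds f₀))) (Set.Icc a b) isCompact_Icc
  rw [Metric.tendstoUniformlyOn_iff] at hu
  refine tendsto_integral_filter_of_dominated_convergence (fun s => ‖f₀ s‖ + 1) ?_ ?_ ?_ ?_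
  · exact Filter.Eventually.of_forall fun _ => ContinuousMap.continuous _ |>.aestronglyMeasurable
  · filter_upwards [hu 1 one_pos] with f hf
    filter_upwards [ae_restrict_mem measurableSet_Icc] with s hs
    have h := hf s hs
    rw [dist_comm, dist_eq_norm] at h
    have := norm_le_insert' (f s) (f₀ s)
    simp only [id] at h
    linarith
  · exact Continuous.integrableOn_Icc (by fun_prop)
  · exact ae_of_all _ fun s => (ContinuousEvalConst.continuous_eval_const s).tendsto f₀

/-- Integration over `[a, b]` as a continuous linear functional on path space. -/
def intCLM (a b : ℝ) : C(ℝ, ℝ) →L[ℝ] ℝ where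
  toFun f := ∫ s in Set.Icc a b, f s
  map_add' f g := integral_add (f.continuous.integrableOn_Icc) (g.continuous.integrableOn_Icc)
  map_smul' c _ := integral_const_mul c _
  cont := continuous_setIntegral_Icc a b

/-- `sbar` as a continuous linear functional on path space. -/
def sbarCLM (j l : ℝ) : C(ℝ, ℝ) →L[ℝ] ℝ :=
  (1 / l) • (intCLM (j + l / 2) (j + l) - intCLM j (j + l / 2))

lemma sbarCLM_apply (j l : ℝ) (ω : C(ℝ, ℝ)) : sbarCLM j l ω = sbar (fun u => ω u) j l := rfl

lemma setIntegral_Icc_add (x : C(ℝ, ℝ)) {a b c : ℝ} (hab : a ≤ b) (hbc : b ≤ c) :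
    (∫ s in Set.Icc a c, x s) = (∫ s in Set.Icc a b, x s) + ∫ s in Set.Icc b c, x s := by
  simp only [integral_Icc_eq_integral_Ioc]
  rw [← intervalIntegral.integral_of_le hab, ← intervalIntegral.integral_of_le hbc,
    ← intervalIntegral.integral_of_le (hab.trans hbc)]
  exact (intervalIntegral.integral_add_adjacent_intervals
    (x.continuous.intervalIntegrable _ _) (x.continuous.intervalIntegrable _ _)).symm

lemma sum_sbar_left (x : C(ℝ, ℝ)) (n : ℕ) :
    ∑ l ∈ Finset.Icc 1 n, sbar (fun u => x u) 0 ((2 : ℝ) ^ l)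
      = (1 / 2 ^ n) * (∫ s in Set.Icc 0 ((2 : ℝ) ^ n), x s) - ∫ s in Set.Icc 0 (1 : ℝ), x s := by
  induction n with
  | zero => simp
  | succ n ih =>
    rw [Finset.sum_Icc_succ_top (by omega), ih, sbar]
    have hp : (0 : ℝ) < 2 ^ n := by positivity
    have e : (2 : ℝ) ^ (n + 1) / 2 = 2 ^ n := by rw [pow_succ]; ring
    simp only [zero_add, e]
    rw [setIntegral_Icc_add x hp.le (show (2 : ℝ) ^ n ≤ 2 ^ (n + 1) by rw [pow_succ]; linarith)]
    rw [pow_succ]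
    field_simp
    ring

lemma sum_sbar_right (x : C(ℝ, ℝ)) (T : ℝ) (n : ℕ) :
    ∑ l ∈ Finset.Icc 1 n, sbar (fun u => x u) (T - (2 : ℝ) ^ l) ((2 : ℝ) ^ l)
      = (∫ s in Set.Icc (T - 1) T, x s)
        - (1 / 2 ^ n) * ∫ s in Set.Icc (T - (2 : ℝ) ^ n) T, x s := by
  induction n with
  | zero => simp
  | succ n ih =>
    rw [Finset.sum_Icc_succ_top (by omega), ih, sbar]
    have hp : (0 : ℝ) < 2 ^ n := by positivity
    have e : T - (2 : ℝ) ^ (n + 1) + (2 : ℝ) ^ (n + 1) / 2 = T - 2 ^ n := by rw [pow_succ]; ring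
    simp only [sub_add_cancel, e]
    rw [setIntegral_Icc_add x (show T - (2 : ℝ) ^ (n + 1) ≤ T - 2 ^ n by rw [pow_succ]; linarith)
      (show T - (2 : ℝ) ^ n ≤ T by linarith)]
    rw [pow_succ]
    field_simp
    ring

/-- Both telescopes reach the mean over `[0, 2^t]`; the top increment is the same for both, so it
occurs twice. -/
lemma sigmaInt_sub_eq (x : C(ℝ, ℝ)) {t : ℕ} (ht : 1 ≤ t) :
    sigmaInt (fun u => x u) ((2 : ℝ) ^ t - 1) - sigmaInt (fun u => x u) 0
      = (∑ l ∈ Finset.Icc 1 t,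
          (if l = t then 2 else 1) * sbar (fun u => x u) 0 ((2 : ℝ) ^ l))
        + ∑ l ∈ Finset.Icc 1 (t - 1),
          sbar (fun u => x u) ((2 : ℝ) ^ t - (2 : ℝ) ^ l) ((2 : ℝ) ^ l) := by
  have h1 := sum_sbar_left x t
  have h2 := sum_sbar_right x ((2 : ℝ) ^ t) t
  obtain ⟨n, rfl⟩ : ∃ n, t = n + 1 := ⟨t - 1, by omega⟩
  rw [Finset.sum_Icc_succ_top (by omega)] at h1 h2 ⊢
  rw [sub_self] at h2
  have h3 : ∑ l ∈ Finset.Icc 1 n, (if l = n + 1 then 2 else 1) * sbar (fun u => x u) 0 ((2 : ℝ) ^ l)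
      = ∑ l ∈ Finset.Icc 1 n, sbar (fun u => x u) 0 ((2 : ℝ) ^ l) := by
    refine Finset.sum_congr rfl fun l hl => ?_
    rw [Finset.mem_Icc] at hl
    rw [if_neg (by omega), one_mul]
  rw [h3, Nat.add_sub_cancel, if_pos rfl, sigmaInt, sigmaInt, sub_add_cancel, zero_add]
  linarith

/-- Under Wiener measure every functional `L` is a centered Gaussian variable, whose characteristic
function is positive. -/
lemma integral_cos_nonneg {P : Measure C(ℝ, ℝ)} {T : ℝ} (hP : IsWienerMeasure T P)
    (L : C(ℝ, ℝ) →L[ℝ] ℝ) : 0 ≤ ∫ ω, cos (L ω) ∂P := by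
  obtain ⟨v, hv⟩ := hP.2.1 L
  have h1 : ∫ ω, cos (L ω) ∂P = ∫ x, cos x ∂(gaussianReal 0 v) := by
    rw [← hv, integral_map L.continuous.measurable.aemeasurable
      continuous_cos.aestronglyMeasurable]
  have hc := charFun_gaussianReal (μ := 0) (v := v) 1
  rw [charFun_apply_real] at hc
  have hint : Integrable (fun x : ℝ => Complex.exp ((1 : ℝ) * x * Complex.I))
      (gaussianReal 0 v) := by
    refine Integrable.of_bound (C := 1) (Continuous.aestronglyMeasurable (by fun_prop))
      (ae_of_all _ fun x => ?_)
    rw [Complex.ofReal_one, one_mul, Complex.norm_exp_ofReal_mul_I]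
  have hre := integral_re hint
  simp only [RCLike.re_to_complex] at hre
  rw [hc] at hre
  simp only [Complex.ofReal_one, one_mul, Complex.exp_ofReal_mul_I_re] at hre
  rw [h1, hre]
  have : ((Complex.ofReal 0) * Complex.I - (v : ℂ) * 1 ^ 2 / 2) = ((-(v : ℝ) / 2 : ℝ) : ℂ) := by
    push_cast; ring
  rw [this, Complex.exp_ofReal_re]
  exact (Real.exp_pos _).le

end functionals

/-- Lemma 2.4: variance decomposition for the hierarchical Gaussian
measure `φ_{α,T}`. -/
theorem statement11 (t : ℕ) (ht : 1 ≤ t) (α : ℝ) (hα : 0 < α)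
    (A : ℕ → ℝ) (hA : ∀ l, 1 ≤ l → l ≤ t → 0 < A l)
    (P : Measure C(ℝ, ℝ)) (hP : IsWienerMeasure ((2:ℝ) ^ t) P) :
    (∫ ω, (sigmaInt (fun u => ω u) ((2:ℝ) ^ t - 1) - sigmaInt (fun u => ω u) 0) ^ 2
        ∂(phiMeasure P α A t))
      ≤ 2 * α⁻¹ * (∑ i ∈ Finset.Icc 1 t, A i ^ 2)
        + 4 * α⁻¹ * ((Finset.Icc 1 t).sup' (Finset.nonempty_Icc.mpr ht)
            (fun l => A l ^ 2)) * (t : ℝ) ^ 2 := by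
  have : IsProbabilityMeasure P := hP.1
  have hs : 0 < √α := Real.sqrt_pos.2 hα
  have hs2 : √α ^ 2 = α := Real.sq_sqrt hα.le
  have hA1 : ∀ l ∈ Finset.Icc 1 t, 0 < A l := fun l hl =>
    hA l (Finset.mem_Icc.1 hl).1 (Finset.mem_Icc.1 hl).2
  have hA2 : ∀ l ∈ Finset.Icc 1 (t - 1), 0 < A l := fun l hl => by
    rw [Finset.mem_Icc] at hl
    exact hA l hl.1 (by omega)
  -- the coordinates `√α A_l⁻¹ s̄` in which the weight is `exp (-‖Y‖²/2)`
  let Λ : (Finset.Icc 1 t ⊕ Finset.Icc 1 (t - 1)) → C(ℝ, ℝ) →L[ℝ] ℝ := Sum.elim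
    (fun l => (√α / A l) • sbarCLM 0 ((2 : ℝ) ^ (l : ℕ)))
    (fun l => (√α / A l) • sbarCLM ((2 : ℝ) ^ t - (2 : ℝ) ^ (l : ℕ)) ((2 : ℝ) ^ (l : ℕ)))
  let Y : C(ℝ, ℝ) → EuclideanSpace ℝ (Finset.Icc 1 t ⊕ Finset.Icc 1 (t - 1)) :=
    fun ω => WithLp.toLp 2 fun i => Λ i ω
  -- the coordinates of `σ_{T-1} - σ_0` in terms of `Y`
  let w : EuclideanSpace ℝ (Finset.Icc 1 t ⊕ Finset.Icc 1 (t - 1)) := WithLp.toLp 2 (Sum.elim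
    (fun l => (if (l : ℕ) = t then 2 else 1) * (A l / √α)) (fun l => A l / √α))
  have hY : Measurable Y := by
    have : Continuous Y := by
      refine (PiLp.continuous_toLp 2 _).comp (continuous_pi fun i => (Λ i).continuous)
    exact this.measurable
  have hK : ∀ v, 0 ≤ ∫ ω, cos (inner ℝ (Y ω) v) ∂P := by
    intro v
    have h := integral_cos_nonneg hP (∑ i, v i • Λ i)
    convert h using 4 with ω
    simp [Y, PiLp.inner_apply]
  have hnorm : ∀ ω, ‖Y ω‖ ^ 2 = α *
      ((∑ l ∈ Finset.Icc 1 t, (A l ^ 2)⁻¹ * (sbar (fun u => ω u) 0 ((2:ℝ) ^ l)) ^ 2)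
      + ∑ l ∈ Finset.Icc 1 (t - 1),
          (A l ^ 2)⁻¹ * (sbar (fun u => ω u) ((2:ℝ) ^ t - (2:ℝ) ^ l) ((2:ℝ) ^ l)) ^ 2) := by
    intro ω
    rw [EuclideanSpace.real_norm_sq_eq, Fintype.sum_sum_type, mul_add, Finset.mul_sum,
      Finset.mul_sum, ← Finset.sum_coe_sort (Finset.Icc 1 t),
      ← Finset.sum_coe_sort (Finset.Icc 1 (t - 1))]
    congr 1 <;>
    · refine Finset.sum_congr rfl fun l _ => ?_
      simp only [Y, Λ, Sum.elim_inl, Sum.elim_inr, smul_apply, smul_eq_mul,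
        sbarCLM_apply]
      rw [mul_pow, div_pow, hs2]
      ring
  have hinner : ∀ ω, inner ℝ w (Y ω) =
      sigmaInt (fun u => ω u) ((2:ℝ) ^ t - 1) - sigmaInt (fun u => ω u) 0 := by
    intro ω
    rw [sigmaInt_sub_eq ω ht, PiLp.inner_apply, Fintype.sum_sum_type,
      ← Finset.sum_coe_sort (Finset.Icc 1 t), ← Finset.sum_coe_sort (Finset.Icc 1 (t - 1))]
    congr 1
    · refine Finset.sum_congr rfl fun l _ => ?_
      have := hA1 l l.2
      simp only [w, Y, Λ, Sum.elim_inl, smul_apply, smul_eq_mul,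
        sbarCLM_apply, RCLike.inner_apply, conj_trivial]
      field_simp
    · refine Finset.sum_congr rfl fun l _ => ?_
      have := hA2 l l.2
      simp only [w, Y, Λ, Sum.elim_inr, smul_apply, smul_eq_mul,
        sbarCLM_apply, RCLike.inner_apply, conj_trivial]
      field_simp
  have hw : ‖w‖ ^ 2 = 2 * α⁻¹ * (∑ i ∈ Finset.Icc 1 t, A i ^ 2) + 2 * α⁻¹ * A t ^ 2 := by
    have h1 : ‖w‖ ^ 2 = α⁻¹ * ((∑ l ∈ Finset.Icc 1 t, (if l = t then 2 else 1) ^ 2 * A l ^ 2)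
        + ∑ l ∈ Finset.Icc 1 (t - 1), A l ^ 2) := by
      rw [EuclideanSpace.real_norm_sq_eq, Fintype.sum_sum_type, mul_add, Finset.mul_sum,
        Finset.mul_sum, ← Finset.sum_coe_sort (Finset.Icc 1 t),
        ← Finset.sum_coe_sort (Finset.Icc 1 (t - 1))]
      congr 1 <;>
      · refine Finset.sum_congr rfl fun l _ => ?_
        simp only [w, Sum.elim_inl, Sum.elim_inr]
        simp only [mul_pow, div_pow, hs2]
        ring
    rw [h1]
    obtain ⟨n, rfl⟩ : ∃ n, t = n + 1 := ⟨t - 1, by omega⟩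
    rw [Finset.sum_Icc_succ_top (by omega), Finset.sum_Icc_succ_top (by omega)]
    have h3 : ∑ l ∈ Finset.Icc 1 n, (if l = n + 1 then (2 : ℝ) else 1) ^ 2 * A l ^ 2
        = ∑ l ∈ Finset.Icc 1 n, A l ^ 2 := by
      refine Finset.sum_congr rfl fun l hl => ?_
      rw [Finset.mem_Icc] at hl
      rw [if_neg (by omega), one_pow, one_mul]
    rw [h3, Nat.add_sub_cancel, if_pos rfl]
    ring
  have hmain := weighted_second_moment_le (P := P) hY hK w
  have hwt : ∀ ω, -(α / 2) *
      ((∑ l ∈ Finset.Icc 1 t, (A l ^ 2)⁻¹ * (sbar (fun u => ω u) 0 ((2:ℝ) ^ l)) ^ 2)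
      + ∑ l ∈ Finset.Icc 1 (t - 1),
          (A l ^ 2)⁻¹ * (sbar (fun u => ω u) ((2:ℝ) ^ t - (2:ℝ) ^ l) ((2:ℝ) ^ l)) ^ 2)
      = -‖Y ω‖ ^ 2 / 2 := by
    intro ω; rw [hnorm]; ring
  have hZint : Integrable (fun ω => rexp (-‖Y ω‖ ^ 2 / 2)) P := by
    have := integrable_weight_mul (P := P) hY (F := fun _ => 1) continuous_const (c := 1)
      (fun y => by
        simp only [mul_one, Real.norm_eq_abs, Real.abs_exp]
        exact Real.exp_le_one_iff.2 (by linarith [sq_nonneg ‖y‖]))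
    simpa using this
  have hZ : 0 < ∫ ω, rexp (-‖Y ω‖ ^ 2 / 2) ∂P := integral_exp_pos hZint
  have hle : (∫ ω, (sigmaInt (fun u => ω u) ((2:ℝ) ^ t - 1) - sigmaInt (fun u => ω u) 0) ^ 2
        ∂(phiMeasure P α A t)) ≤ ‖w‖ ^ 2 := by
    simp_rw [phiMeasure, hwt, integral_tilted, smul_eq_mul, ← hinner, div_mul_eq_mul_div]
    rw [integral_div, div_le_iff₀ hZ]
    exact hmain
  refine hle.trans ?_
  rw [hw]
  have hsup : A t ^ 2 ≤ (Finset.Icc 1 t).sup' (Finset.nonempty_Icc.mpr ht) (fun l => A l ^ 2) :=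
    Finset.le_sup' (fun l => A l ^ 2) (Finset.mem_Icc.2 ⟨ht, le_rfl⟩)
  have ht2 : (1 : ℝ) ≤ (t : ℝ) ^ 2 := one_le_pow₀ (by exact_mod_cast ht)
  set S := (Finset.Icc 1 t).sup' (Finset.nonempty_Icc.mpr ht) (fun l => A l ^ 2)
  have hS : 0 ≤ S := (sq_nonneg _).trans hsup
  have ha : 0 < α⁻¹ := inv_pos.2 hα
  have h1 : 2 * α⁻¹ * A t ^ 2 ≤ 4 * α⁻¹ * S := by
    have := mul_le_mul_of_nonneg_left hsup ha.le
    have := mul_nonneg ha.le hS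
    linarith
  have h2 : 4 * α⁻¹ * S ≤ 4 * α⁻¹ * S * (t : ℝ) ^ 2 := le_mul_of_one_le_right (by positivity) ht2
  linarith
end
end

section
/- Let t ∈ ℕ with T = 2^t an integer ≥ 2, and let β > 0 satisfy T^β ≥ 2. Let μ be a centered Gaussian probability measure on C([0,T];ℝ) such that μ ⪯ P, where P is one-dimensional Wiener measure on C([0,T];ℝ), and such that E^{μ}[x_s²] ≤ T^β for every s ∈ [0,T]. Then μ( sup_{0 ≤ s ≤ T} |x_s| ≥ T^{β/2} √(200 log T) ) ≤ 4 T^{−9}, where log denotes the natural logarithm. -/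
/-!
The proof is a dyadic chaining argument. Write `K = √V * √(200 log T)` with `V = T ^ β`.

For `s, r ∈ [0, T]` the set `{|x_s - x_r| < a}` is measurable, symmetric and convex, so the
domination `μ ⪯ P` gives the increments of `x` under `μ` the Brownian tail
`2 exp (-a² / (2 |s - r|))` (`increment_tail`). The one-point tails come from the variance bound
`V` and `gaussian_tail`.

On the grid of mesh `2⁻⁶` the values are required to stay below `K / 2`, and the increments along
the grid of mesh `2^{-(6 + k + 1)}` below `(K / 16) (3 / 4)^k`. These increment bounds sum to
`K / 4`, so by continuity the path stays at or below `3 K / 4 < K` on `[0, T]` (`chain_bound`).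
The failure probabilities are summed by a union bound. Increments at level `k` have exponent
proportional to `(9 / 8)^k log T`, because `(3 / 4)² * 2 = 9 / 8 > 1`; this beats the `T 2^{k + 7}`
terms. The mesh `2⁻⁶` makes the constant in the exponent large enough at `k = 0`, using `V ≥ 2`.
The total is at most `T⁻⁹ + 2 T⁻⁹` (`base_sum`, `level_sum`).
-/

open MeasureTheory ProbabilityTheory Real

noncomputable section

/-- `stochDom μ ν` formalizes `μ ⪯ ν`: `μ(A) ≥ ν(A)` for every measurable,
convex, symmetric set `A`. -/
def stochDom {Ω : Type*} [MeasurableSpace Ω] [AddCommGroup Ω] [Module ℝ Ω]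
    (μ ν : Measure Ω) : Prop :=
  ∀ A : Set Ω, MeasurableSet A → Convex ℝ A → (∀ x ∈ A, -x ∈ A) → ν A ≤ μ A

/-- A centered Gaussian measure on path space: a probability measure under which every
continuous linear functional has a centered Gaussian distribution. -/
def IsCenteredGaussianPath (μ : Measure C(ℝ, ℝ)) : Prop :=
  IsProbabilityMeasure μ ∧
  ∀ L : C(ℝ, ℝ) →L[ℝ] ℝ, ∃ v : NNReal, μ.map L = gaussianReal 0 v

/-- The Chernoff bound for a functional with law `N(0, v)`, `v ≤ V`. Replacing `v` by a positive
upper bound `V` includes the degenerate case `v = 0`. -/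
lemma gaussian_tail {Ω : Type*} [MeasurableSpace Ω] {ν : Measure Ω} [IsProbabilityMeasure ν]
    {X : Ω → ℝ} (hX : Measurable X) {v : NNReal} (hv : ν.map X = gaussianReal 0 v)
    {V : ℝ} (hV : 0 < V) (hvV : (v : ℝ) ≤ V) {a : ℝ} (ha : 0 ≤ a) :
    ν {ω | a ≤ |X ω|} ≤ ENNReal.ofReal (2 * exp (-a ^ 2 / (2 * V))) := by
  have hsub : HasSubgaussianMGF X V.toNNReal ν := by
    refine ⟨fun s => ?_, fun s => ?_⟩
    · have h := integrable_exp_mul_gaussianReal (μ := 0) (v := v) s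
      rw [← hv] at h
      exact (integrable_map_measure (by fun_prop) hX.aemeasurable).1 h
    · rw [mgf_gaussianReal hv, Real.coe_toNNReal _ hV.le]
      apply exp_le_exp.2
      nlinarith [sq_nonneg s]
  have h1 := hsub.measure_ge_le ha
  have h2 := hsub.neg.measure_ge_le ha
  rw [Real.coe_toNNReal _ hV.le] at h1 h2
  have hset : {ω | a ≤ |X ω|} = {ω | a ≤ X ω} ∪ {ω | a ≤ (-X) ω} := by
    ext ω
    simp [le_abs]
  rw [← ofReal_measureReal, hset]
  apply ENNReal.ofReal_le_ofReal
  linarith [measureReal_union_le (μ := ν) {ω | a ≤ X ω} {ω | a ≤ (-X) ω}]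

lemma gaussian_memLp {Ω : Type*} [MeasurableSpace Ω] {ν : Measure Ω}
    {X : Ω → ℝ} (hX : Measurable X) {v : NNReal} (hv : ν.map X = gaussianReal 0 v) :
    MemLp X 2 ν := by
  have h := memLp_id_gaussianReal (μ := 0) (v := v) 2
  rw [← hv] at h
  exact (memLp_map_measure_iff (by fun_prop) hX.aemeasurable).1 h

lemma gaussian_sq {Ω : Type*} [MeasurableSpace Ω] {ν : Measure Ω}
    {X : Ω → ℝ} (hX : Measurable X) {v : NNReal} (hv : ν.map X = gaussianReal 0 v) :
    ∫ ω, X ω ^ 2 ∂ν = v := by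
  have h := variance_fun_id_gaussianReal (μ := 0) (v := v)
  rw [variance_eq_integral (by fun_prop), integral_id_gaussianReal, ← hv,
    integral_map hX.aemeasurable (by fun_prop)] at h
  simpa using h

/-- Increments under a measure dominated by Wiener measure have the Brownian tail: the event
`{|x_s - x_r| < a}` is a symmetric convex slab, so the tail bound transfers from `P` to `μ`. -/
lemma increment_tail {T : ℝ} {P μ : Measure C(ℝ, ℝ)} (hP : IsWienerMeasure T P)
    (hμ : IsProbabilityMeasure μ) (hdom : stochDom μ P) {r s : ℝ}
    (hr : 0 ≤ r) (hrs : r < s) (hs : s ≤ T) {a : ℝ} (ha : 0 ≤ a) :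
    μ {ω | a ≤ |ω s - ω r|} ≤ ENNReal.ofReal (2 * exp (-a ^ 2 / (2 * (s - r)))) := by
  obtain ⟨hP1, hPG, hPcov⟩ := hP
  have hev : ∀ u : ℝ, Measurable fun ω : C(ℝ, ℝ) => ω u := fun u =>
    (ContinuousMap.evalCLM ℝ u : C(ℝ, ℝ) →L[ℝ] ℝ).continuous.measurable
  have hmem : ∀ u : ℝ, MemLp (fun ω : C(ℝ, ℝ) => ω u) 2 P := fun u => by
    obtain ⟨v, hv⟩ := hPG (ContinuousMap.evalCLM ℝ u)
    exact gaussian_memLp (hev u) hv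
  have hint : ∀ u w : ℝ, Integrable (fun ω : C(ℝ, ℝ) => ω u * ω w) P := fun u w =>
    (hmem u).integrable_mul (hmem w)
  have hmeas : Measurable fun ω : C(ℝ, ℝ) => ω s - ω r := (hev s).sub (hev r)
  obtain ⟨w, hw⟩ := hPG (ContinuousMap.evalCLM ℝ s - ContinuousMap.evalCLM ℝ r)
  have hw' : P.map (fun ω : C(ℝ, ℝ) => ω s - ω r) = gaussianReal 0 w := hw
  have hwval : (w : ℝ) = s - r := by
    rw [← gaussian_sq hmeas hw']
    have hrT : r ∈ Set.Icc 0 T := ⟨hr, by linarith⟩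
    have hsT : s ∈ Set.Icc 0 T := ⟨by linarith, hs⟩
    have e : ∀ ω : C(ℝ, ℝ),
        (ω s - ω r) ^ 2 = ω s * ω s - 2 * (ω s * ω r) + ω r * ω r := fun ω => by ring
    simp_rw [e]
    have hi : Integrable (fun ω : C(ℝ, ℝ) => ω s * ω s - 2 * (ω s * ω r)) P :=
      (hint s s).sub ((hint s r).const_mul 2)
    rw [integral_add hi (hint r r), integral_sub (hint s s) ((hint s r).const_mul 2), integral_const_mul,
      hPcov s s hsT hsT, hPcov s r hsT hrT, hPcov r r hrT hrT, min_self, min_self,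
      min_eq_right hrs.le]
    ring
  have hA : MeasurableSet {ω : C(ℝ, ℝ) | |ω s - ω r| < a} :=
    measurableSet_lt hmeas.abs measurable_const
  have hconv : Convex ℝ {ω : C(ℝ, ℝ) | |ω s - ω r| < a} := by
    have hE : {ω : C(ℝ, ℝ) | |ω s - ω r| < a} =
        (ContinuousMap.evalCLM ℝ s - ContinuousMap.evalCLM ℝ r : C(ℝ, ℝ) →L[ℝ] ℝ).toLinearMap ⁻¹'
          Metric.ball 0 a := Set.ext fun ω => (mem_ball_zero_iff (a := ω s - ω r)).symm
    rw [hE]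
    exact (convex_ball (0 : ℝ) a).linear_preimage _
  have hd := hdom _ hA hconv (fun ω hω => by
    have : |(-ω) s - (-ω) r| = |ω s - ω r| := by
      rw [← abs_neg]
      congr 1
      simp only [ContinuousMap.neg_apply]
      ring
    exact this.trans_lt hω)
  have hc : {ω : C(ℝ, ℝ) | a ≤ |ω s - ω r|} = {ω : C(ℝ, ℝ) | |ω s - ω r| < a}ᶜ := by
    ext ω; simp
  have hle : μ {ω | a ≤ |ω s - ω r|} ≤ P {ω | a ≤ |ω s - ω r|} := by
    rw [hc, prob_compl_eq_one_sub hA, prob_compl_eq_one_sub hA]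
    exact tsub_le_tsub_left hd 1
  exact hle.trans (gaussian_tail hmeas hw' (by linarith) hwval.le ha)

/-- The value at a dyadic point of level `m + k` differs from the value at some point of level `m`
by at most one increment at each intermediate level. The increment bounds `K / 16 * (3 / 4) ^ k`
telescope to less than `K / 4`. -/
lemma chain_dyadic (f : ℝ → ℝ) (m N : ℕ) (K : ℝ)
    (h0 : ∀ j : ℕ, j ≤ N * 2 ^ m → |f (j / 2 ^ m)| ≤ K / 2)
    (h1 : ∀ k j : ℕ, j < N * 2 ^ (m + k + 1) →
      |f ((j + 1 : ℕ) / 2 ^ (m + k + 1)) - f (j / 2 ^ (m + k + 1))| ≤ K / 16 * (3 / 4) ^ k)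
    (hK : 0 ≤ K) (k : ℕ) :
    ∀ j : ℕ, j ≤ N * 2 ^ (m + k) → |f (j / 2 ^ (m + k))| ≤ K / 2 + K / 4 * (1 - (3 / 4) ^ k) := by
  induction k with
  | zero => simpa using h0
  | succ k ih =>
    intro j hj
    rw [← add_assoc] at hj ⊢
    have hpow : N * 2 ^ (m + k + 1) = 2 * (N * 2 ^ (m + k)) := by ring
    have half : ∀ i : ℕ, ((2 * i : ℕ) : ℝ) / 2 ^ (m + k + 1) = i / 2 ^ (m + k) := fun i => by
      push_cast
      field_simp
      ring
    have hpos : 0 ≤ K * (3 / 4 : ℝ) ^ k := by positivity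
    rcases Nat.even_or_odd' j with ⟨i, rfl | rfl⟩
    · rw [half]
      have := ih i (by omega)
      rw [pow_succ]
      linarith
    · have a1 := ih i (by omega)
      have a2 := h1 k (2 * i) (by omega)
      rw [half] at a2
      rw [pow_succ (3 / 4 : ℝ)]
      have a3 := abs_sub_abs_le_abs_sub (f ((2 * i + 1 : ℕ) / 2 ^ (m + k + 1)))
        (f (i / 2 ^ (m + k)))
      linarith

/-- By continuity, the bound at dyadic points extends to every point of `[0, N]`. -/
lemma chain_bound (f : C(ℝ, ℝ)) (m N : ℕ) (K : ℝ)
    (h0 : ∀ j : ℕ, j ≤ N * 2 ^ m → |f (j / 2 ^ m)| ≤ K / 2)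
    (h1 : ∀ k j : ℕ, j < N * 2 ^ (m + k + 1) →
      |f ((j + 1 : ℕ) / 2 ^ (m + k + 1)) - f (j / 2 ^ (m + k + 1))| ≤ K / 16 * (3 / 4) ^ k)
    (hK : 0 ≤ K) (s : ℝ) (hs : 0 ≤ s) (hsN : s ≤ N) : |f s| ≤ 3 / 4 * K := by
  have hp : Filter.Tendsto (fun k : ℕ => (2 : ℝ) ^ (m + k)) Filter.atTop Filter.atTop :=
    (tendsto_pow_atTop_atTop_of_one_lt one_lt_two).comp
      (Filter.tendsto_atTop_mono (fun k => Nat.le_add_left k m) Filter.tendsto_id)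
  have hlim := (tendsto_nat_floor_mul_div_atTop hs).comp hp
  have hf := ((f.continuous.tendsto s).comp hlim).abs
  refine le_of_tendsto hf (Filter.Eventually.of_forall fun k => ?_)
  have hfl : ⌊s * 2 ^ (m + k)⌋₊ ≤ N * 2 ^ (m + k) := by
    apply Nat.floor_le_of_le
    push_cast
    gcongr
  have := chain_dyadic f m N K h0 h1 hK k _ hfl
  have hpos : 0 ≤ K * (3 / 4 : ℝ) ^ k := by positivity
  simp only [Function.comp]
  linarith

/-- Contribution of the base grid of mesh `2⁻⁶` to the union bound. -/
lemma base_sum {T V : ℝ} (hT : 2 ≤ T) (hV : 0 < V) :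
    (T * 2 ^ 6 + 1) * (2 * exp (-(Real.sqrt V * Real.sqrt (200 * Real.log T) / 2) ^ 2 / (2 * V)))
      ≤ T ^ (-(9 : ℝ)) := by
  have hT0 : 0 < T := by linarith
  have hL : 0 ≤ Real.log T := Real.log_nonneg (by linarith)
  have e : -(Real.sqrt V * Real.sqrt (200 * Real.log T) / 2) ^ 2 / (2 * V)
      = Real.log T * (-25 : ℝ) := by
    rw [div_pow, mul_pow, Real.sq_sqrt hV.le, Real.sq_sqrt (by positivity)]
    field_simp
    ring
  rw [e, ← Real.rpow_def_of_pos hT0]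
  have h2 : (T * 2 ^ 6 + 1) * 2 ≤ T ^ (16 : ℕ) := by
    have : (2 : ℝ) ^ 15 ≤ T ^ 15 := by gcongr
    nlinarith
  calc _ = ((T * 2 ^ 6 + 1) * 2) * T ^ (-25 : ℝ) := by ring
    _ ≤ T ^ (16 : ℕ) * T ^ (-25 : ℝ) := by gcongr
    _ = T ^ (-(9 : ℝ)) := by
      rw [← Real.rpow_natCast, ← Real.rpow_add hT0]
      norm_num

/-- Contribution of the increments between levels `6 + k` and `6 + k + 1` to the union bound.
Here `V ≥ 2` makes the exponent at least `100 * (9 / 8) ^ k * log T ≥ (100 + 12 * k) * log T`. -/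
lemma level_sum {T V : ℝ} (hT : 2 ≤ T) (hV : 2 ≤ V) (k : ℕ) :
    (T * 2 ^ (6 + k + 1)) *
      (2 * exp (-(Real.sqrt V * Real.sqrt (200 * Real.log T) / 16 * (3 / 4) ^ k) ^ 2
        / (2 * (1 / 2 ^ (6 + k + 1)))))
      ≤ T ^ (-(9 : ℝ)) * (1 / 2) ^ k := by
  have hT0 : 0 < T := by linarith
  have hL : 0 ≤ Real.log T := Real.log_nonneg (by linarith)
  have e : -(Real.sqrt V * Real.sqrt (200 * Real.log T) / 16 * (3 / 4) ^ k) ^ 2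
        / (2 * (1 / 2 ^ (6 + k + 1))) = -(50 * V * Real.log T * (9 / 8) ^ k) := by
    rw [mul_pow, div_pow, mul_pow, Real.sq_sqrt (by linarith), Real.sq_sqrt (by positivity)]
    have : ((9 : ℝ) / 8) ^ k = ((3 / 4) ^ k) ^ 2 * 2 ^ k := by
      rw [← pow_mul, mul_comm k 2, pow_mul, ← mul_pow]
      norm_num
    rw [this]
    field_simp
    ring
  have hb : 1 + (k : ℝ) * (1 / 8) ≤ (9 / 8 : ℝ) ^ k := by
    have := one_add_mul_le_pow (a := (1 / 8 : ℝ)) (by norm_num) k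
    norm_num at this ⊢
    exact this
  have hexp : exp (-(50 * V * Real.log T * (9 / 8) ^ k)) ≤ T ^ (-(100 + 12 * k : ℝ)) := by
    rw [Real.rpow_def_of_pos hT0]
    apply exp_le_exp.2
    have h1 : (100 + 12 * k : ℝ) ≤ 50 * V * (9 / 8) ^ k := by
      have : 100 * (9 / 8 : ℝ) ^ k ≤ 50 * V * (9 / 8) ^ k := by
        gcongr
        linarith
      have hk : (0 : ℝ) ≤ k := by positivity
      linarith
    nlinarith
  rw [e]
  have h2 : (2 : ℝ) ^ (8 + k) ≤ T ^ (8 + k) := by gcongr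
  have h3 : T ^ (-(k : ℝ)) ≤ (1 / 2) ^ k := by
    rw [Real.rpow_neg hT0.le, Real.rpow_natCast, one_div, inv_pow]
    gcongr
  calc _ = T * 2 ^ (8 + k) * exp (-(50 * V * Real.log T * (9 / 8) ^ k)) := by ring
    _ ≤ T * T ^ (8 + k) * T ^ (-(100 + 12 * k : ℝ)) := by gcongr
    _ = T ^ ((9 + k : ℝ) - (100 + 12 * k)) := by
      rw [← pow_succ', ← Real.rpow_natCast, ← Real.rpow_add hT0]
      congr 1
      push_cast
      ring
    _ ≤ T ^ (-(9 : ℝ) + -(k : ℝ)) := by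
      apply Real.rpow_le_rpow_of_exponent_le (by linarith)
      have hk : (0 : ℝ) ≤ k := by positivity
      linarith
    _ = T ^ (-(9 : ℝ)) * T ^ (-(k : ℝ)) := Real.rpow_add hT0 _ _
    _ ≤ _ := by gcongr

/-- Proposition 5.2: uniform-in-time tail bound for a Gaussian path
measure dominated by Wiener measure with pointwise variance at most `T^β`. -/
theorem statement16 (t : ℕ) (ht : (2:ℝ) ≤ (2:ℝ) ^ t)
    (β : ℝ) (hβ : 0 < β) (hβ2 : (2:ℝ) ≤ ((2:ℝ) ^ t) ^ β)
    (P : Measure C(ℝ, ℝ)) (hP : IsWienerMeasure ((2:ℝ) ^ t) P)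
    (μ : Measure C(ℝ, ℝ)) (hμG : IsCenteredGaussianPath μ)
    (hdom : stochDom μ P)
    (hvar : ∀ s : ℝ, s ∈ Set.Icc 0 ((2:ℝ) ^ t) → (∫ ω, (ω s) ^ 2 ∂μ) ≤ ((2:ℝ) ^ t) ^ β) :
    μ {ω | ∃ s : ℝ, 0 ≤ s ∧ s ≤ (2:ℝ) ^ t ∧
        ((2:ℝ) ^ t) ^ (β / 2) * Real.sqrt (200 * Real.log ((2:ℝ) ^ t)) ≤ |ω s|}
      ≤ ENNReal.ofReal (4 * ((2:ℝ) ^ t) ^ (-(9:ℝ))) := by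
  obtain ⟨hμ1, hμL⟩ := hμG
  set T : ℝ := (2 : ℝ) ^ t with hTdef
  have hT0 : 0 < T := by linarith
  set V : ℝ := T ^ β with hVdef
  have hV0 : 0 < V := by linarith
  have hVs : T ^ (β / 2) = Real.sqrt V := by
    rw [Real.sqrt_eq_rpow, hVdef, ← Real.rpow_mul hT0.le]
    ring_nf
  rw [hVs]
  set K : ℝ := Real.sqrt V * Real.sqrt (200 * Real.log T) with hKdef
  have hlog : 0 < Real.log T := Real.log_pos (by linarith)
  have hK : 0 < K := by positivity
  have hN : ((2 ^ t : ℕ) : ℝ) = T := by push_cast; rfl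
  set B : ℕ → Set C(ℝ, ℝ) := fun j => {ω | K / 2 ≤ |ω ((j : ℝ) / 2 ^ 6)|} with hB
  set D : ℕ → ℕ → Set C(ℝ, ℝ) := fun k j => {ω | K / 16 * (3 / 4) ^ k ≤
    |ω (((j + 1 : ℕ) : ℝ) / 2 ^ (6 + k + 1)) - ω ((j : ℝ) / 2 ^ (6 + k + 1))|} with hD
  have hsub : {ω : C(ℝ, ℝ) | ∃ s : ℝ, 0 ≤ s ∧ s ≤ T ∧ K ≤ |ω s|} ⊆
      (⋃ j ∈ Finset.range (2 ^ t * 2 ^ 6 + 1), B j) ∪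
        ⋃ k, ⋃ j ∈ Finset.range (2 ^ t * 2 ^ (6 + k + 1)), D k j := by
    rintro ω ⟨s, hs0, hsT, hs⟩
    by_contra hcon
    simp only [Set.mem_union, Set.mem_iUnion, Finset.mem_range, not_or, not_exists, hB, hD,
      Set.mem_ofPred_eq, not_le] at hcon
    have := chain_bound ω 6 (2 ^ t) K (fun j hj => (hcon.1 j (by omega)).le)
      (fun k j hj => (hcon.2 k j hj).le) hK.le s hs0 (by rw [hN]; exact hsT)
    linarith
  have hbase : μ (⋃ j ∈ Finset.range (2 ^ t * 2 ^ 6 + 1), B j)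
      ≤ ENNReal.ofReal (T ^ (-(9 : ℝ))) := by
    have hj : ∀ j ∈ Finset.range (2 ^ t * 2 ^ 6 + 1),
        μ (B j) ≤ ENNReal.ofReal (2 * exp (-(K / 2) ^ 2 / (2 * V))) := fun j hj => by
      obtain ⟨v, hv⟩ := hμL (ContinuousMap.evalCLM ℝ ((j : ℝ) / 2 ^ 6))
      have hm : Measurable fun ω : C(ℝ, ℝ) => ω ((j : ℝ) / 2 ^ 6) :=
        (ContinuousMap.evalCLM ℝ ((j : ℝ) / 2 ^ 6) : C(ℝ, ℝ) →L[ℝ] ℝ).continuous.measurable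
      have hv' : μ.map (fun ω : C(ℝ, ℝ) => ω ((j : ℝ) / 2 ^ 6)) = gaussianReal 0 v := hv
      have hjT : (j : ℝ) / 2 ^ 6 ≤ T := by
        rw [div_le_iff₀ (by positivity), ← hN]
        exact_mod_cast Nat.lt_succ_iff.1 (Finset.mem_range.1 hj)
      have hvV : (v : ℝ) ≤ V := by
        rw [← gaussian_sq hm hv']
        exact hvar _ ⟨by positivity, hjT⟩
      exact gaussian_tail hm hv' hV0 hvV (by positivity)
    refine (measure_biUnion_finset_le _ _).trans ((Finset.sum_le_sum hj).trans ?_)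
    rw [Finset.sum_const, Finset.card_range, nsmul_eq_mul, ← ENNReal.ofReal_natCast,
      ← ENNReal.ofReal_mul (by positivity)]
    apply ENNReal.ofReal_le_ofReal
    have := base_sum ht hV0
    simpa only [Nat.cast_add, Nat.cast_one, Nat.cast_mul, Nat.cast_pow, Nat.cast_ofNat,
      ← hTdef] using this
  have hlevel : ∀ k, μ (⋃ j ∈ Finset.range (2 ^ t * 2 ^ (6 + k + 1)), D k j)
      ≤ ENNReal.ofReal (T ^ (-(9 : ℝ)) * (1 / 2) ^ k) := fun k => by
    have hj : ∀ j ∈ Finset.range (2 ^ t * 2 ^ (6 + k + 1)),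
        μ (D k j) ≤ ENNReal.ofReal
          (2 * exp (-(K / 16 * (3 / 4) ^ k) ^ 2 / (2 * (1 / 2 ^ (6 + k + 1))))) := fun j hj => by
      have hd : ((j + 1 : ℕ) : ℝ) / 2 ^ (6 + k + 1) - (j : ℝ) / 2 ^ (6 + k + 1)
          = 1 / 2 ^ (6 + k + 1) := by
        push_cast
        ring
      have hpos : (0 : ℝ) < 1 / 2 ^ (6 + k + 1) := by positivity
      have hjT : ((j + 1 : ℕ) : ℝ) / 2 ^ (6 + k + 1) ≤ T := by
        rw [div_le_iff₀ (by positivity), ← hN]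
        exact_mod_cast Finset.mem_range.1 hj
      have := increment_tail hP hμ1 hdom (r := (j : ℝ) / 2 ^ (6 + k + 1))
        (s := ((j + 1 : ℕ) : ℝ) / 2 ^ (6 + k + 1)) (by positivity) (by linarith) hjT
        (a := K / 16 * (3 / 4) ^ k) (by positivity)
      rwa [hd] at this
    refine (measure_biUnion_finset_le _ _).trans ((Finset.sum_le_sum hj).trans ?_)
    rw [Finset.sum_const, Finset.card_range, nsmul_eq_mul, ← ENNReal.ofReal_natCast,
      ← ENNReal.ofReal_mul (by positivity)]
    apply ENNReal.ofReal_le_ofReal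
    have := level_sum ht hβ2 k
    simpa only [Nat.cast_add, Nat.cast_one, Nat.cast_mul, Nat.cast_pow, Nat.cast_ofNat,
      ← hTdef] using this
  have hlevels : μ (⋃ k, ⋃ j ∈ Finset.range (2 ^ t * 2 ^ (6 + k + 1)), D k j)
      ≤ ENNReal.ofReal (T ^ (-(9 : ℝ)) * 2) := by
    refine (measure_iUnion_le _).trans ((ENNReal.tsum_le_tsum hlevel).trans ?_)
    rw [← ENNReal.ofReal_tsum_of_nonneg (fun k => by positivity)
      (summable_geometric_two.mul_left _), tsum_mul_left, tsum_geometric_two]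
  refine (measure_mono hsub).trans ((measure_union_le _ _).trans
    ((add_le_add hbase hlevels).trans ?_))
  have hp : 0 ≤ T ^ (-(9 : ℝ)) := by positivity
  rw [← ENNReal.ofReal_add hp (by positivity)]
  apply ENNReal.ofReal_le_ofReal
  linarith
end
end
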